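/- Strict positivity in the sector generated by f_*: suppose s₀ > 0 satisfies the free boundary condition tanh(φ(s₀)) = B(s₀)·K/(a·sinh(2s₀)), and let r := arcosh(A(s₀)·cosh(φ(s₀))). Then for every integer k with k² ≥ 4 and every continuously differentiable h : [−s₀, s₀] → ℝ that is not identically zero, one has S_k(f_*·h) > 0. -/

import Mathlib

namespace MoriCatenoid

/-- Profile function `B(s) = √(a·cosh(2s) − 1/2)` of the Mori family. -/
noncomputable def B (a s : ℝ) : ℝ := Real.sqrt (a * Real.cosh (2 * s) - 1 / 2)

/-- Profile function `A(s) = √(a·cosh(2s) + 1/2)` of the Mori family. -/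
noncomputable def A (a s : ℝ) : ℝ := Real.sqrt (a * Real.cosh (2 * s) + 1 / 2)

/-- The constant `K = √(a² − 1/4)`. -/
noncomputable def K (a : ℝ) : ℝ := Real.sqrt (a ^ 2 - 1 / 4)

/-- The angle function `φ(s) = K·∫₀ˢ dt/(A(t)²·B(t))`. -/
noncomputable def φ (a s : ℝ) : ℝ := K a * ∫ t in (0:ℝ)..s, 1 / ((A a t) ^ 2 * B a t)

/-- The mode-one Jacobi field `f_*(s) = d/ds (A(s)·cosh(φ(s)))`. -/
noncomputable def fstar (a s : ℝ) : ℝ := deriv (fun t => A a t * Real.cosh (φ a t)) s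

/-- Squared norm of the second fundamental form, `|II|²(s) = 2·(B''(s)/B(s) − 1)`. -/
noncomputable def IIsq (a s : ℝ) : ℝ := 2 * (deriv (deriv (B a)) s / B a s - 1)

/-- The mode-`k` potential `W_k(s) = |II|²(s) − 2 − k²/B(s)²`. -/
noncomputable def W (a : ℝ) (k : ℤ) (s : ℝ) : ℝ := IIsq a s - 2 - (k : ℝ) ^ 2 / (B a s) ^ 2

/-- Inverse hyperbolic cosine: `arcosh x = log (x + √(x² − 1))`. -/
noncomputable def arcosh (x : ℝ) : ℝ := Real.log (x + Real.sqrt (x ^ 2 - 1))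

/-- The axial boost field `u_*(s) = −a·sinh(2s)/B(s)`. -/
noncomputable def ustar (a s : ℝ) : ℝ := -a * Real.sinh (2 * s) / B a s

/-- The radial quadratic form of mode `k`:
`S_k(u) = ∫_{−s₀}^{s₀} (B·u'² − B·W_k·u²) − coth(r)·B(s₀)·(u(s₀)² + u(−s₀)²)`,
where `u'` is the derivative of `u` within `[−s₀, s₀]`. -/
noncomputable def Sk (a s₀ r : ℝ) (k : ℤ) (u : ℝ → ℝ) : ℝ :=
  (∫ s in (-s₀)..s₀,
      (B a s * (derivWithin u (Set.Icc (-s₀) s₀) s) ^ 2 - B a s * W a k s * u s ^ 2))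
    - Real.cosh r / Real.sinh r * B a s₀ * (u s₀ ^ 2 + u (-s₀) ^ 2)

lemma cc_pos (a : ℝ) (ha : 1 / 2 < a) (s : ℝ) : 0 < a * Real.cosh (2 * s) - 1 / 2 := by
  have := Real.one_le_cosh (2 * s)
  nlinarith

lemma B_pos (a : ℝ) (ha : 1 / 2 < a) (s : ℝ) : 0 < B a s := Real.sqrt_pos.2 (cc_pos a ha s)

lemma A_pos (a : ℝ) (ha : 1 / 2 < a) (s : ℝ) : 0 < A a s :=
  Real.sqrt_pos.2 (by have := cc_pos a ha s; linarith)

lemma K_pos (a : ℝ) (ha : 1 / 2 < a) : 0 < K a := Real.sqrt_pos.2 (by nlinarith)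

lemma B_sq (a : ℝ) (ha : 1 / 2 < a) (s : ℝ) : B a s ^ 2 = a * Real.cosh (2 * s) - 1 / 2 :=
  Real.sq_sqrt (cc_pos a ha s).le

lemma A_sq (a : ℝ) (ha : 1 / 2 < a) (s : ℝ) : A a s ^ 2 = a * Real.cosh (2 * s) + 1 / 2 :=
  Real.sq_sqrt (by have := cc_pos a ha s; linarith)

lemma K_sq (a : ℝ) (ha : 1 / 2 < a) : K a ^ 2 = a ^ 2 - 1 / 4 :=
  Real.sq_sqrt (by nlinarith)

lemma key (a : ℝ) (ha : 1 / 2 < a) (s : ℝ) :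
    a ^ 2 * Real.sinh (2 * s) ^ 2 + K a ^ 2 = A a s ^ 2 * B a s ^ 2 := by
  rw [A_sq a ha, B_sq a ha, K_sq a ha, Real.sinh_sq]; ring

lemma hasDeriv_C (a s : ℝ) : HasDerivAt (fun s => a * Real.cosh (2 * s))
    (2 * (a * Real.sinh (2 * s))) s := by
  have h2 : HasDerivAt (fun s : ℝ => 2 * s) 2 s := by
    simpa using (hasDerivAt_id s).const_mul 2
  exact (h2.cosh.const_mul a).congr_deriv (by ring)

lemma hasDeriv_S (a s : ℝ) : HasDerivAt (fun s => a * Real.sinh (2 * s))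
    (2 * (a * Real.cosh (2 * s))) s := by
  have h2 : HasDerivAt (fun s : ℝ => 2 * s) 2 s := by
    simpa using (hasDerivAt_id s).const_mul 2
  exact (h2.sinh.const_mul a).congr_deriv (by ring)

lemma hasDeriv_B (a : ℝ) (ha : 1 / 2 < a) (s : ℝ) :
    HasDerivAt (B a) (a * Real.sinh (2 * s) / B a s) s := by
  have h1 := ((hasDeriv_C a s).sub_const (1 / 2)).sqrt (cc_pos a ha s).ne'
  refine h1.congr_deriv ?_
  change _ / (2 * B a s) = _
  have := B_pos a ha s
  field_simp

lemma hasDeriv_A (a : ℝ) (ha : 1 / 2 < a) (s : ℝ) :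
    HasDerivAt (A a) (a * Real.sinh (2 * s) / A a s) s := by
  have h1 := ((hasDeriv_C a s).add_const (1 / 2)).sqrt
    (by have := cc_pos a ha s; linarith : (0:ℝ) < a * Real.cosh (2 * s) + 1 / 2).ne'
  refine h1.congr_deriv ?_
  change _ / (2 * A a s) = _
  have := A_pos a ha s
  field_simp

lemma cont_A (a : ℝ) (ha : 1 / 2 < a) : Continuous (A a) :=
  continuous_iff_continuousAt.2 fun s => (hasDeriv_A a ha s).continuousAt

lemma cont_B (a : ℝ) (ha : 1 / 2 < a) : Continuous (B a) :=
  continuous_iff_continuousAt.2 fun s => (hasDeriv_B a ha s).continuousAt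

lemma hasDeriv_phi (a : ℝ) (ha : 1 / 2 < a) (s : ℝ) :
    HasDerivAt (φ a) (K a / (A a s ^ 2 * B a s)) s := by
  have hc : Continuous fun t => 1 / ((A a t) ^ 2 * B a t) := by
    refine continuous_const.div (((cont_A a ha).pow 2).mul (cont_B a ha)) fun t => ?_
    have := A_pos a ha t
    have := B_pos a ha t
    positivity
  have := (hc.integral_hasStrictDerivAt 0 s).hasDerivAt.const_mul (K a)
  exact this.congr_deriv (by ring)

lemma B_neg (a s : ℝ) : B a (-s) = B a s := by simp [B]

lemma A_neg (a s : ℝ) : A a (-s) = A a s := by simp [A]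

lemma phi_neg (a s : ℝ) : φ a (-s) = -φ a s := by
  have h1 := intervalIntegral.integral_comp_neg (a := 0) (b := s)
    (fun t => 1 / ((A a t) ^ 2 * B a t))
  simp only [A_neg, B_neg, neg_zero] at h1
  rw [φ, φ, h1, intervalIntegral.integral_symm]
  ring

lemma phi_nonneg (a : ℝ) (ha : 1 / 2 < a) (s : ℝ) (hs : 0 ≤ s) : 0 ≤ φ a s := by
  refine mul_nonneg (K_pos a ha).le (intervalIntegral.integral_nonneg hs fun t _ => ?_)
  have := A_pos a ha t
  have := B_pos a ha t
  positivity

/-- Closed form of `fstar`. -/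
noncomputable def F (a s : ℝ) : ℝ :=
  a * Real.sinh (2 * s) / A a s * Real.cosh (φ a s) + K a / (A a s * B a s) * Real.sinh (φ a s)

/-- Closed form of the derivative of `fstar`. -/
noncomputable def G (a s : ℝ) : ℝ :=
  2 * (A a s * Real.cosh (φ a s)) - a * Real.sinh (2 * s) / B a s ^ 2 * F a s

lemma hasDeriv_X (a : ℝ) (ha : 1 / 2 < a) (s : ℝ) :
    HasDerivAt (fun t => A a t * Real.cosh (φ a t)) (F a s) s := by
  refine ((hasDeriv_A a ha s).mul (hasDeriv_phi a ha s).cosh).congr_deriv ?_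
  have := A_pos a ha s
  have := B_pos a ha s
  unfold F
  field_simp

lemma fstar_eq (a : ℝ) (ha : 1 / 2 < a) : fstar a = F a :=
  funext fun s => (hasDeriv_X a ha s).deriv

lemma hasDeriv_F (a : ℝ) (ha : 1 / 2 < a) (s : ℝ) : HasDerivAt (F a) (G a s) s := by
  have hA := A_pos a ha s
  have hB := B_pos a ha s
  have hAB : A a s * B a s ≠ 0 := by positivity
  have h1 := ((hasDeriv_S a s).div (hasDeriv_A a ha s) hA.ne').mul (hasDeriv_phi a ha s).cosh
  have h2 := ((hasDerivAt_const s (K a)).div ((hasDeriv_A a ha s).mul (hasDeriv_B a ha s)) hAB).mul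
    (hasDeriv_phi a ha s).sinh
  refine (h1.add h2).congr_deriv ?_
  have hk := key a ha s
  have hC : a * Real.cosh (2 * s) = A a s ^ 2 - 1 / 2 := by rw [A_sq a ha]; ring
  have hBA : B a s ^ 2 = A a s ^ 2 - 1 := by rw [A_sq a ha, B_sq a ha]; ring
  simp only [G, F, Pi.mul_apply, Pi.div_apply]
  rw [hC]
  generalize a * Real.cosh (2 * s) = cc at *
  have hk' : (a * Real.sinh (2 * s)) ^ 2 = A a s ^ 2 * B a s ^ 2 - K a ^ 2 := by rw [← hk]; ring
  generalize a * Real.sinh (2 * s) = ss at *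
  generalize A a s = x at *
  generalize B a s = y at *
  generalize Real.cosh (φ a s) = p at *
  generalize Real.sinh (φ a s) = q at *
  generalize K a = κ at *
  field_simp
  linear_combination p * y * hk' - p * y * ss ^ 2 * hBA

lemma hasDeriv_B' (a : ℝ) (ha : 1 / 2 < a) (s : ℝ) :
    HasDerivAt (fun s => a * Real.sinh (2 * s) / B a s) 
      (2 * (a * Real.cosh (2 * s)) / B a s - (a * Real.sinh (2 * s)) ^ 2 / B a s ^ 3) s := by
  have hB := B_pos a ha s
  refine ((hasDeriv_S a s).div (hasDeriv_B a ha s) hB.ne').congr_deriv ?_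
  field_simp

lemma W_eq (a : ℝ) (ha : 1 / 2 < a) (k : ℤ) (s : ℝ) :
    W a k s = 2 * ((2 * (a * Real.cosh (2 * s)) / B a s
      - (a * Real.sinh (2 * s)) ^ 2 / B a s ^ 3) / B a s - 1) - 2 - (k : ℝ) ^ 2 / B a s ^ 2 := by
  have : deriv (B a) = fun s => a * Real.sinh (2 * s) / B a s :=
    funext fun s => (hasDeriv_B a ha s).deriv
  rw [W, IIsq, this, (hasDeriv_B' a ha s).deriv]

lemma hasDeriv_BG (a : ℝ) (ha : 1 / 2 < a) (s : ℝ) :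
    HasDerivAt (fun s => B a s * G a s) (-(B a s * W a 1 s * F a s)) s := by
  have hB := B_pos a ha s
  have hfun : (fun s => B a s * G a s) = fun s => 2 * (B a s * (A a s * Real.cosh (φ a s)))
      - a * Real.sinh (2 * s) / B a s * F a s := by
    funext t
    have := B_pos a ha t
    unfold G
    field_simp
  rw [hfun]
  refine ((((hasDeriv_B a ha s).mul (hasDeriv_X a ha s)).const_mul 2).sub
    ((hasDeriv_B' a ha s).mul (hasDeriv_F a ha s))).congr_deriv ?_
  rw [W_eq a ha, G]
  have hC : a * Real.cosh (2 * s) = B a s ^ 2 + 1 / 2 := by rw [B_sq a ha]; ring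
  rw [hC]
  push_cast
  field_simp
  ring

lemma F_neg (a s : ℝ) : F a (-s) = -F a s := by
  simp only [F, A_neg, B_neg, phi_neg, mul_neg, Real.sinh_neg, Real.cosh_neg]; ring

lemma G_neg (a s : ℝ) : G a (-s) = G a s := by
  simp only [G, F_neg, A_neg, B_neg, phi_neg, mul_neg, Real.sinh_neg, Real.cosh_neg]; ring

lemma F_pos (a : ℝ) (ha : 1 / 2 < a) (s : ℝ) (hs : 0 < s) : 0 < F a s := by
  have hA := A_pos a ha s
  have hB := B_pos a ha s
  have hK := K_pos a ha
  have h1 : 0 < Real.sinh (2 * s) := Real.sinh_pos_iff.2 (by linarith)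
  have h2 : 0 ≤ Real.sinh (φ a s) := Real.sinh_nonneg_iff.2 (phi_nonneg a ha s hs.le)
  have h3 := Real.cosh_pos (φ a s)
  have h4 : 0 < a := by linarith
  unfold F
  positivity

lemma F_ne (a : ℝ) (ha : 1 / 2 < a) (s : ℝ) (hs : s ≠ 0) : F a s ≠ 0 := by
  rcases lt_or_gt_of_ne hs with h | h
  · have := F_pos a ha (-s) (by linarith)
    rw [F_neg] at this
    linarith
  · exact (F_pos a ha s h).ne'

lemma cosh_sinh_arcosh (x : ℝ) (hx : 1 ≤ x) :
    Real.cosh (arcosh x) = x ∧ Real.sinh (arcosh x) = Real.sqrt (x ^ 2 - 1) := by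
  have h0 := Real.sqrt_nonneg (x ^ 2 - 1)
  have h1 : Real.sqrt (x ^ 2 - 1) ^ 2 = x ^ 2 - 1 := Real.sq_sqrt (by nlinarith)
  have hp : 0 < x + Real.sqrt (x ^ 2 - 1) := by linarith
  have hi : (x + Real.sqrt (x ^ 2 - 1))⁻¹ = x - Real.sqrt (x ^ 2 - 1) := by
    rw [inv_eq_iff_eq_inv]
    refine eq_inv_of_mul_eq_one_left ?_
    linear_combination -h1
  rw [Real.cosh_eq, Real.sinh_eq, arcosh, Real.exp_neg, Real.exp_log hp, hi]
  constructor <;> ring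

lemma boundary (a : ℝ) (ha : 1 / 2 < a) (s₀ : ℝ) (hs₀ : 0 < s₀)
    (hFBC : Real.tanh (φ a s₀) = B a s₀ * K a / (a * Real.sinh (2 * s₀)))
    (r : ℝ) (hr : r = arcosh (A a s₀ * Real.cosh (φ a s₀))) :
    Real.cosh r / Real.sinh r * F a s₀ = G a s₀ := by
  have hA := A_pos a ha s₀
  have hB := B_pos a ha s₀
  have hF := F_pos a ha s₀ hs₀
  have hS : 0 < a * Real.sinh (2 * s₀) :=
    mul_pos (by linarith) (Real.sinh_pos_iff.2 (by linarith))
  have hc := Real.cosh_pos (φ a s₀)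
  have hc1 := Real.one_le_cosh (φ a s₀)
  have hcs := Real.cosh_sq (φ a s₀)
  have hk := key a ha s₀
  have hBA : B a s₀ ^ 2 = A a s₀ ^ 2 - 1 := by rw [A_sq a ha, B_sq a ha]; ring
  have hA1 : 1 ≤ A a s₀ := by nlinarith
  have hX : 1 ≤ A a s₀ * Real.cosh (φ a s₀) := by nlinarith
  obtain ⟨h1, h2⟩ := cosh_sinh_arcosh _ hX
  rw [← hr] at h1 h2
  rw [Real.tanh_eq_sinh_div_cosh, div_eq_div_iff hc.ne' hS.ne'] at hFBC
  have hk' : (a * Real.sinh (2 * s₀)) ^ 2 + K a ^ 2 = A a s₀ ^ 2 * B a s₀ ^ 2 := by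
    rw [← hk]; ring
  have hFe : F a s₀ * (a * Real.sinh (2 * s₀)) = A a s₀ * Real.cosh (φ a s₀) * B a s₀ ^ 2 := by
    unfold F
    generalize a * Real.sinh (2 * s₀) = ss at *
    have hq : Real.sinh (φ a s₀) = B a s₀ * K a * Real.cosh (φ a s₀) / ss := by
      field_simp; linarith
    rw [hq]
    field_simp
    linear_combination hk'
  have hG : G a s₀ = A a s₀ * Real.cosh (φ a s₀) := by
    unfold G
    have : a * Real.sinh (2 * s₀) / B a s₀ ^ 2 * F a s₀ = A a s₀ * Real.cosh (φ a s₀) := by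
      rw [div_mul_eq_mul_div, mul_comm, hFe]
      field_simp
    rw [this]; ring
  have hF2 : F a s₀ ^ 2 = (A a s₀ * Real.cosh (φ a s₀)) ^ 2 - 1 := by
    have h3 : (a * Real.sinh (2 * s₀)) ^ 2 ≠ 0 := by positivity
    apply mul_right_cancel₀ h3
    rw [← mul_pow, hFe]
    generalize a * Real.sinh (2 * s₀) = ss at *
    generalize A a s₀ = x at *
    generalize B a s₀ = y at *
    generalize Real.cosh (φ a s₀) = p at *
    generalize Real.sinh (φ a s₀) = q at *
    generalize K a = κ at *
    have e1 : q ^ 2 * ss ^ 2 = y ^ 2 * κ ^ 2 * p ^ 2 := by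
      rw [← mul_pow, hFBC]; ring
    linear_combination -p ^ 2 * y ^ 2 * hk' + p ^ 2 * ss ^ 2 * hBA - e1 - ss ^ 2 * hcs
  have hsr : Real.sinh r = F a s₀ := by
    rw [h2, ← hF2, Real.sqrt_sq hF.le]
  rw [h1, hsr, hG]
  field_simp

/-- Strict positivity in the sector generated by `f_*`: under the free boundary
condition, for every integer `k` with `k² ≥ 4` and every `C¹` function `h` on
`[−s₀, s₀]` not identically zero there, `S_k(f_*·h) > 0`. -/
theorem strict_positivity_fstar_sector (a : ℝ) (ha : 1 / 2 < a) (s₀ : ℝ) (hs₀ : 0 < s₀)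
    (hFBC : Real.tanh (φ a s₀) = B a s₀ * K a / (a * Real.sinh (2 * s₀)))
    (r : ℝ) (hr : r = arcosh (A a s₀ * Real.cosh (φ a s₀)))
    (k : ℤ) (hk : 4 ≤ k ^ 2)
    (h : ℝ → ℝ) (hh : ContDiffOn ℝ 1 h (Set.Icc (-s₀) s₀))
    (hne : ∃ s ∈ Set.Icc (-s₀) s₀, h s ≠ 0) :
    0 < Sk a s₀ r k (fun s => fstar a s * h s) := by
  have hlt : -s₀ < s₀ := by linarith
  have hb := boundary a ha s₀ hs₀ hFBC r hr
  rw [Sk, fstar_eq a ha]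
  set I := Set.Icc (-s₀) s₀ with hI
  have hud : UniqueDiffOn ℝ I := uniqueDiffOn_Icc hlt
  set h' := derivWithin h I with hh'
  have hdiff : ∀ s ∈ I, HasDerivWithinAt h (h' s) I s := fun s hs =>
    ((hh.differentiableOn one_ne_zero) s hs).hasDerivWithinAt
  have ch : ContinuousOn h I := hh.continuousOn
  have ch' : ContinuousOn h' I := hh.continuousOn_derivWithin hud le_rfl
  have cB := (cont_B a ha).continuousOn (s := I)
  have cF : ContinuousOn (F a) I :=
    (continuous_iff_continuousAt.2 fun s => (hasDeriv_F a ha s).continuousAt).continuousOn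
  have cBG : ContinuousOn (fun s => B a s * G a s) I :=
    (continuous_iff_continuousAt.2 fun s => (hasDeriv_BG a ha s).continuousAt).continuousOn
  have hBne : ∀ s, B a s ≠ 0 := fun s => (B_pos a ha s).ne'
  have cG : ContinuousOn (G a) I := by
    refine (cBG.div cB fun s _ => hBne s).congr fun s _ => ?_
    have := hBne s
    simp only [Pi.div_apply]
    field_simp
  have cW : ContinuousOn (W a 1) I := by
    have e : W a 1 = fun s => 2 * ((2 * (a * Real.cosh (2 * s)) / B a s
      - (a * Real.sinh (2 * s)) ^ 2 / B a s ^ 3) / B a s - 1) - 2 - ((1 : ℤ) : ℝ) ^ 2 / B a s ^ 2 :=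
      funext fun s => W_eq a ha 1 s
    rw [e]
    have := cont_B a ha
    apply Continuous.continuousOn
    fun_prop (disch := intro x; simp [hBne x])
  -- total derivative
  set Q : ℝ → ℝ := fun s => (B a s * G a s) * F a s * h s ^ 2 with hQ
  set Q' : ℝ → ℝ := fun s => (-(B a s * W a 1 s * F a s) * F a s + (B a s * G a s) * G a s)
    * h s ^ 2 + (B a s * G a s) * F a s * (2 * h s * h' s) with hQ'
  set R : ℝ → ℝ := fun s => B a s * (F a s * h' s) ^ 2
    + ((k : ℝ) ^ 2 - 1) / B a s * (F a s * h s) ^ 2 with hR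
  have cQ : ContinuousOn Q I := (cBG.mul cF).mul (ch.pow 2)
  have cQ' : ContinuousOn Q' I := by
    rw [hQ']
    fun_prop
  have cR : ContinuousOn R I := by
    rw [hR]
    refine (cB.mul ((cF.mul ch').pow 2)).add (ContinuousOn.mul ?_ ((cF.mul ch).pow 2))
    exact continuousOn_const.div cB fun s _ => hBne s
  have dQ : ∀ s ∈ Set.Ioo (-s₀) s₀, HasDerivAt Q (Q' s) s := by
    intro s hs
    have hd : HasDerivAt h (h' s) s :=
      (hdiff s (Set.Ioo_subset_Icc_self hs)).hasDerivAt (Icc_mem_nhds hs.1 hs.2)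
    refine ((((hasDeriv_BG a ha s).mul (hasDeriv_F a ha s))).mul (hd.pow 2)).congr_deriv ?_
    simp only [hQ', Pi.mul_apply, Pi.pow_apply]
    push_cast
    ring
  have iQ' : IntervalIntegrable Q' MeasureTheory.volume (-s₀) s₀ :=
    ContinuousOn.intervalIntegrable_of_Icc hlt.le cQ'
  have iR : IntervalIntegrable R MeasureTheory.volume (-s₀) s₀ :=
    ContinuousOn.intervalIntegrable_of_Icc hlt.le cR
  have hFTC : ∫ s in (-s₀)..s₀, Q' s = Q s₀ - Q (-s₀) :=
    intervalIntegral.integral_eq_sub_of_hasDerivAt_of_le hlt.le cQ dQ iQ'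
  have hint : (∫ s in (-s₀)..s₀, (B a s * (derivWithin (fun s => F a s * h s) I s) ^ 2
      - B a s * W a k s * (F a s * h s) ^ 2)) = ∫ s in (-s₀)..s₀, (Q' s + R s) := by
    refine intervalIntegral.integral_congr fun s hs => ?_
    rw [Set.uIcc_of_le hlt.le] at hs
    have e1 : derivWithin (fun s => F a s * h s) I s = G a s * h s + F a s * h' s :=
      ((hasDeriv_F a ha s).hasDerivWithinAt.mul (hdiff s hs)).derivWithin (hud s hs)
    have e2 : W a k s = W a 1 s - ((k : ℝ) ^ 2 - 1) / B a s ^ 2 := by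
      simp only [W]; push_cast; ring
    have := hBne s
    simp only [e1, e2, hQ', hR]
    field_simp
    ring
  rw [hint, intervalIntegral.integral_add iQ' iR, hFTC]
  have hk1 : (4 : ℝ) ≤ (k : ℝ) ^ 2 := by exact_mod_cast hk
  have hpos : 0 < ∫ s in (-s₀)..s₀, R s := by
    refine intervalIntegral.integral_pos hlt cR (fun s _ => ?_) ?_
    · have := B_pos a ha s
      have h3 : 0 ≤ (k : ℝ) ^ 2 - 1 := by linarith
      simp only [hR]
      positivity
    · obtain ⟨c, hc, hc0, hhc⟩ : ∃ c ∈ I, c ≠ 0 ∧ h c ≠ 0 := by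
        obtain ⟨s, hs, hhs⟩ := hne
        by_cases h0 : s = 0
        · subst h0
          have hn : I ∈ nhds (0 : ℝ) := Icc_mem_nhds (by linarith) hs₀
          have h1 : ∀ᶠ x in nhds (0 : ℝ), h x ≠ 0 :=
            ((ch 0 hs).continuousAt hn).eventually_ne hhs
          have h2 : ∀ᶠ x in nhdsWithin (0 : ℝ) {0}ᶜ, (x ∈ I ∧ h x ≠ 0) ∧ x ∈ ({0}ᶜ : Set ℝ) :=
            (((Filter.eventually_mem_set.2 hn).and h1).filter_mono nhdsWithin_le_nhds).and
              self_mem_nhdsWithin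
          obtain ⟨x, hx⟩ := h2.exists
          exact ⟨x, hx.1.1, hx.2, hx.1.2⟩
        · exact ⟨s, hs, h0, hhs⟩
      refine ⟨c, hc, ?_⟩
      have := B_pos a ha c
      have h3 : 0 < (k : ℝ) ^ 2 - 1 := by linarith
      have h4 := F_ne a ha c hc0
      simp only [hR]
      positivity
  have hbd : Q s₀ - Q (-s₀) = Real.cosh r / Real.sinh r * B a s₀ *
      ((F a s₀ * h s₀) ^ 2 + (F a (-s₀) * h (-s₀)) ^ 2) := by
    simp only [hQ, F_neg, G_neg, B_neg, ← hb]
    ring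
  linarith

end MoriCatenoid
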